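/- Let E be a finite system of substring equations on a text T of length n, and let DC ⊆ {1,…,n} be a set that contains both starting positions p and p' of every equation T[p..q] = T[p'..q'] in E. Then there exists a subsystem E' ⊆ E with |E'| ≤ |DC| such that for every integer S ≥ 0, T satisfies E' with shortage S if and only if T satisfies E with shortage S. -/

import Mathlib

/-!
View the equations as edges `{p, p'}` of a multigraph on `DC`, weighted by length; the subsystem
`E'` is a maximum-weight spanning forest. The forest is encoded by linear algebra: an edge `e`
becomes the signed incidence vector `δ_p - δ_{p'}` in `ℚ ^ DC`, acyclicity becomes linear
independence (so `|E'| ≤ dim ℚ ^ DC = |DC|`), and "the ends of `e` are joined by a path of edges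
of `E'` at least as long as `e`" becomes membership in the span of the vectors of these edges.
Processing the equations by decreasing length, and keeping one when its vector is new, gives such
a family (`exists_greedy_basis`).

For an offset `S ≤ j ≤ q - p - S` in an equation `e`, each `f ∈ E'` at least as long as `e` asserts
`T (f.p + j) = T (f.p' + j)`. Hence the linear functional given by the indicator of
`{x | T (x + j) = T (e.p + j)}` kills the vectors of all these `f`, so it kills that of `e`,
which says `T (e.p + j) = T (e.p' + j)`.
-/


/-- A substring equation `T[p..q] = T[p'..q']`. -/
structure SubEq where
  p : ℤ
  q : ℤ
  p' : ℤ
  q' : ℤ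
deriving DecidableEq

/-- The equation is well-formed: both fragments have the same length. -/
def SubEq.valid (e : SubEq) : Prop := e.q - e.p = e.q' - e.p'

/-- The (oriented) shift of the equation. -/
def SubEq.shift (e : SubEq) : ℤ := e.p' - e.p

/-- The length of the equation. -/
def SubEq.len (e : SubEq) : ℤ := e.q - e.p + 1

/-- The equation is on a text of length `n`. -/
def SubEq.onText (e : SubEq) (n : ℤ) : Prop :=
  1 ≤ e.p ∧ 1 ≤ e.p' ∧ e.q ≤ n ∧ e.q' ≤ n

/-- `T` satisfies the equation `e` with shortage `S`. -/
def SatS {α : Type*} (T : ℤ → α) (e : SubEq) (S : ℤ) : Prop :=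
  ∀ k : ℤ, e.p + S ≤ k → k ≤ e.q - S → T k = T (k + e.shift)

/-- The signed incidence vector `δ_p - δ_{p'}` of an equation, restricted to the coordinates in
`DC`; it is zero when `p = p'`. -/
def SubEq.incidence (DC : Finset ℤ) (e : SubEq) : DC → ℚ :=
  fun x => (if (x : ℤ) = e.p then 1 else 0) - (if (x : ℤ) = e.p' then 1 else 0)

theorem SubEq.sum_incidence_mul {DC : Finset ℤ} {e : SubEq} (hp : e.p ∈ DC) (hp' : e.p' ∈ DC)
    (c : ℤ → ℚ) : ∑ x : DC, e.incidence DC x * c x = c e.p - c e.p' := by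
  simp only [SubEq.incidence, sub_mul, Finset.sum_sub_distrib]
  rw [Finset.sum_coe_sort DC (fun x : ℤ => (if x = e.p then (1 : ℚ) else 0) * c x),
    Finset.sum_coe_sort DC (fun x : ℤ => (if x = e.p' then (1 : ℚ) else 0) * c x)]
  simp [hp, hp']

/-- The greedy algorithm: among weighted vectors, there is a linearly independent subfamily such
that every vector lies in the span of members of the subfamily that weigh at least as much. -/
theorem exists_greedy_basis {ι V : Type*} [DecidableEq ι] [AddCommGroup V] [Module ℚ V]
    (v : ι → V) (w : ι → ℤ) (E : Finset ι) :
    ∃ E' ⊆ E, LinearIndepOn ℚ v (E' : Set ι) ∧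
      ∀ e ∈ E, v e ∈ Submodule.span ℚ (v '' {f | f ∈ E' ∧ w e ≤ w f}) := by
  induction E using Finset.induction_on_min_value w with
  | empty => exact ⟨∅, by simp, by simp, by simp⟩
  | insert a s ha hmin ih =>
    obtain ⟨E', hsub, hli, hspan⟩ := ih
    by_cases hmem : v a ∈ Submodule.span ℚ (v '' (E' : Set ι))
    · refine ⟨E', hsub.trans (Finset.subset_insert _ _), hli, fun e he => ?_⟩
      rcases Finset.mem_insert.1 he with rfl | he
      · refine Submodule.span_mono (Set.image_mono ?_) hmem
        exact fun f hf => ⟨hf, hmin f (hsub hf)⟩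
      · exact hspan e he
    · refine ⟨insert a E', Finset.insert_subset_insert _ hsub, ?_, fun e he => ?_⟩
      · rw [Finset.coe_insert]
        exact hli.insert hmem
      · rcases Finset.mem_insert.1 he with rfl | he
        · exact Submodule.subset_span ⟨e, ⟨Finset.mem_insert_self _ _, le_rfl⟩, rfl⟩
        · refine Submodule.span_mono (Set.image_mono ?_) (hspan e he)
          exact fun f hf => ⟨Finset.mem_insert_of_mem hf.1, hf.2⟩

/-- Lemma 22 (maximum-weight spanning forest reduction): if all starting positions
of the equations of `E` lie in `DC ⊆ {1,…,n}`, then there is a subsystem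
`E' ⊆ E` with `|E'| ≤ |DC|` which is equivalent to `E` for every shortage. -/
theorem spanning_forest_reduction {α : Type*} (T : ℤ → α) (n : ℤ)
    (E : Finset SubEq) (hE : ∀ e ∈ E, e.valid ∧ e.onText n)
    (DC : Finset ℤ) (hDC : DC ⊆ Finset.Icc 1 n)
    (hstart : ∀ e ∈ E, e.p ∈ DC ∧ e.p' ∈ DC) :
    ∃ E' ⊆ E, E'.card ≤ DC.card ∧
      ∀ S : ℤ, 0 ≤ S → ((∀ e ∈ E', SatS T e S) ↔ (∀ e ∈ E, SatS T e S)) := by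
  classical
  obtain ⟨E', hsub, hli, hspan⟩ := exists_greedy_basis (SubEq.incidence DC) SubEq.len E
  refine ⟨E', hsub, ?_, fun S _ => ⟨fun h e he k hk₁ hk₂ => ?_, fun h e he => h e (hsub he)⟩⟩
  · have hcard := LinearIndependent.fintype_card_le_finrank hli
    simpa using hcard
  · let c : ℤ → ℚ := fun x => if T (x + (k - e.p)) = T k then 1 else 0
    let φ : (DC → ℚ) →ₗ[ℚ] ℚ := Fintype.linearCombination ℚ (fun x : DC => c x)
    have hφ : ∀ f ∈ E, φ (f.incidence DC) = c f.p - c f.p' := fun f hf => by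
      rw [← SubEq.sum_incidence_mul (hstart f hf).1 (hstart f hf).2 c]
      simp [φ, Fintype.linearCombination_apply]
    have hker : Submodule.span ℚ (SubEq.incidence DC '' {f | f ∈ E' ∧ e.len ≤ f.len}) ≤
        LinearMap.ker φ := by
      rw [Submodule.span_le]
      rintro _ ⟨f, ⟨hf, hlen⟩, rfl⟩
      rw [SetLike.mem_coe, LinearMap.mem_ker, hφ f (hsub hf)]
      simp only [SubEq.len] at hlen
      have hT := h f hf (f.p + (k - e.p)) (by omega) (by omega)
      rw [show f.p + (k - e.p) + f.shift = f.p' + (k - e.p) by simp only [SubEq.shift]; ring]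
        at hT
      simp [c, hT]
    have hzero : φ (e.incidence DC) = 0 := hker (hspan e he)
    rw [hφ e he] at hzero
    have hk : k + e.shift = e.p' + (k - e.p) := by simp only [SubEq.shift]; ring
    rw [hk]
    by_contra hne
    simp [c, Ne.symm hne] at hzero
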